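/- arXiv:1707.05494 — 10 statements merged into one kernel-verified Lean document; each statement's English description precedes it below -/
import Mathlib

section
/- Let K be a field and let a, b, h, c, g, d, f be elements of K, pairwise distinct, such that (a; b,h; c,g; d,f) is an algebraic tree, i.e. (b-a)(h-a) = (c-a)(g-a) = (d-a)(f-a). Then the three couples (b,h), (c,g), (d,f) form an algebraic involution, i.e. (d-g)(f-g)(b-c)(h-c) = (b-g)(h-g)(d-c)(f-c), (c-f)(g-f)(b-d)(h-d) = (b-f)(h-f)(c-d)(g-d), and (c-h)(g-h)(d-b)(f-b) = (d-h)(f-h)(c-b)(g-b). (Desargues' theorem that an arbre gives an involution; Theorem 2.1 / one direction of Theorem 3.1.) -/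
/-!
If `(x, y)` and `(z, w)` have the same product of differences with the souche `a`, then
`(x - w) * (y - w)` factors as `(w - a) * (z + w - x - y)` (`arbre_factor`): the second factor is
symmetric in `z` and `w`. Each equality of the involution compares two couples with a
third one `(z, w)`; after factoring, both sides are
`(z - a) * (w - a) * (z + w - x - y) * (z + w - u - v)` (`arbre_desargues`).
-/

lemma arbre_factor {K : Type*} [Field K] {a x y z w : K}
    (H : (x - a) * (y - a) = (z - a) * (w - a)) :
    (x - w) * (y - w) = (w - a) * (z + w - x - y) := by
  linear_combination H

/-- One equality of the involution, with `(z, w)` the couple to which `(x, y)` and `(u, v)` are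
compared. -/
lemma arbre_desargues {K : Type*} [Field K] {a x y u v z w : K}
    (hxy : (x - a) * (y - a) = (z - a) * (w - a))
    (huv : (u - a) * (v - a) = (z - a) * (w - a)) :
    (x - w) * (y - w) * (u - z) * (v - z) = (u - w) * (v - w) * (x - z) * (y - z) := by
  have hxw := arbre_factor hxy
  have huw := arbre_factor huv
  have hxz := arbre_factor (hxy.trans (mul_comm _ _))
  have huz := arbre_factor (huv.trans (mul_comm _ _))
  rw [mul_assoc _ (u - z), mul_assoc _ (x - z), hxw, huw, hxz, huz]
  ring

/-- Desargues' theorem that an algebraic tree (arbre) gives an algebraic involution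
(Theorem 2.1 / one direction of Theorem 3.1). -/
theorem arbre_gives_involution {K : Type*} [Field K] (a b h c g d f : K)
    (hdist : List.Pairwise (· ≠ ·) [a, b, h, c, g, d, f])
    (h1 : (b - a) * (h - a) = (c - a) * (g - a))
    (h2 : (c - a) * (g - a) = (d - a) * (f - a)) :
    (d - g) * (f - g) * (b - c) * (h - c) = (b - g) * (h - g) * (d - c) * (f - c) ∧
    (c - f) * (g - f) * (b - d) * (h - d) = (b - f) * (h - f) * (c - d) * (g - d) ∧
    (c - h) * (g - h) * (d - b) * (f - b) = (d - h) * (f - h) * (c - b) * (g - b) := by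
  exact ⟨arbre_desargues h2.symm h1, arbre_desargues h2 (h1.trans h2),
    arbre_desargues h1.symm (h1.trans h2).symm⟩
end

section
/- Let K be a field and let b, h, c, g, d, f be pairwise distinct elements of K forming an algebraic involution, and assume moreover that c + g ≠ d + f. Then there exists a point a ∈ K (a 'souche') such that (b-a)(h-a) = (c-a)(g-a) = (d-a)(f-a), i.e. (a; b,h; c,g; d,f) is an algebraic tree. (Theorem 2.2 / converse direction of Theorem 3.1: an involution comes from an arbre.) -/
/-!
Write `Q₁, Q₂, Q₃` for the monic quadratics with roots `{b, h}`, `{c, g}`, `{d, f}`. A souche is a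
common zero of the polynomials `Q₁ - Q₂` and `Q₃ - Q₂`, which have degree at most one. The first
identity says `Q₃(g) Q₁(c) = Q₁(g) Q₃(c)`; since `Q₂` vanishes at `c` and `g`, it is the vanishing
of `c - g` times the determinant of the coefficients of these two polynomials. As `c ≠ g`, they are
proportional, so the zero of `Q₃ - Q₂`, which exists because `c + g ≠ d + f`, is a zero of
`Q₁ - Q₂` as well.
-/

/-- Theorem 2.2 / converse direction of Theorem 3.1: an algebraic involution whose
souche is at finite distance (c + g ≠ d + f) comes from an algebraic tree. -/
theorem involution_has_souche {K : Type*} [Field K] (b h c g d f : K)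
    (hdist : List.Pairwise (· ≠ ·) [b, h, c, g, d, f])
    (h1 : (d - g) * (f - g) * (b - c) * (h - c) = (b - g) * (h - g) * (d - c) * (f - c))
    (h2 : (c - f) * (g - f) * (b - d) * (h - d) = (b - f) * (h - f) * (c - d) * (g - d))
    (h3 : (c - h) * (g - h) * (d - b) * (f - b) = (d - h) * (f - h) * (c - b) * (g - b))
    (hfin : c + g ≠ d + f) :
    ∃ a : K, (b - a) * (h - a) = (c - a) * (g - a) ∧
      (c - a) * (g - a) = (d - a) * (f - a) := by
  have hcg : c - g ≠ 0 := by
    simp only [List.pairwise_cons, List.mem_cons] at hdist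
    exact sub_ne_zero.mpr (hdist.2.2.1 g (Or.inl rfl))
  have hs : d + f - (c + g) ≠ 0 := sub_ne_zero.mpr hfin.symm
  have hdet : (d + f - (c + g)) * (b * h - c * g) = (b + h - (c + g)) * (d * f - c * g) := by
    apply mul_left_cancel₀ hcg
    linear_combination h1
  -- The zero of `Q₃ - Q₂`.
  obtain ⟨a, ha⟩ : ∃ a : K, (d + f - (c + g)) * a = d * f - c * g :=
    ⟨(d * f - c * g) / (d + f - (c + g)), mul_div_cancel₀ _ hs⟩
  refine ⟨a, ?_, by linear_combination ha⟩
  apply mul_left_cancel₀ hs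
  linear_combination hdet - (b + h - (c + g)) * ha
end

section
/- Desargues' fundamental tree identity (identity (4), page 4 line 15 of the Brouillon Project): let K be a field and a, c, g, d, f ∈ K with (c-a)(g-a) = (d-a)(f-a). Then (c-a)·(f-g)·(d-g) = (g-a)·(d-c)·(f-c); equivalently, when all quantities are nonzero, the ratio of the couple of branches AC : AG equals the ratio of the relative rectangles (CD·CF) : (GD·GF). -/
/-- Desargues' fundamental tree identity (identity (4), page 4 line 15 of the
Brouillon Project): the branch AC is to AG as the relative rectangle CD·CF is to
GD·GF, in cross-multiplied form. -/
theorem tree_identity {K : Type*} [Field K] (a c g d f : K)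
    (h : (c - a) * (g - a) = (d - a) * (f - a)) :
    (c - a) * ((f - g) * (d - g)) = (g - a) * ((d - c) * (f - c)) := by
  -- With `C = c - a`, etc., the two sides differ by `(G - C) * (C * G - D * F)`.
  linear_combination (g - c) * h
end

section
/- One involution identity implies the other two: let K be a field and let b, h, c, g, d, f be pairwise distinct elements of K satisfying (d-g)(f-g)(b-c)(h-c) = (b-g)(h-g)(d-c)(f-c). Then also (c-f)(g-f)(b-d)(h-d) = (b-f)(h-f)(c-d)(g-d) and (c-h)(g-h)(d-b)(f-b) = (d-h)(f-h)(c-b)(g-b); that is, the three couples (b,h), (c,g), (d,f) form an algebraic involution. -/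
/-!
The involution condition is the linear dependence of the three monic quadratics whose roots are
the couples `(b, h)`, `(c, g)`, `(d, f)`, i.e. the vanishing of the determinant
`involutionDet` of their coefficients. For each couple, the two sides of the corresponding
product identity differ, up to sign, by this determinant times the difference of the elements of
the couple (`involution_identity` is the case of `(c, g)`). As the elements of each couple
are distinct, each of the three identities is equivalent to the vanishing of the same determinant.
-/

/-- The determinant with rows `(1, x + y, x * y)`, one for each of the couples
`(b, h)`, `(c, g)`, `(d, f)`. These rows are, up to sign, the coefficients of
`(X - x) * (X - y)`. -/
def involutionDet {K : Type*} [Field K] (b h c g d f : K) : K :=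
  ((c + g) - (b + h)) * (d * f - b * h) - ((d + f) - (b + h)) * (c * g - b * h)

/-- The left side is the `2 × 2` determinant of the values at `c` and `g` of the monic quadratics
with roots `b, h` and `d, f`; it is alternating in `c, g`, which accounts for the factor `c - g`. -/
lemma involution_identity {K : Type*} [Field K] (b h c g d f : K) :
    (d - g) * (f - g) * (b - c) * (h - c) - (b - g) * (h - g) * (d - c) * (f - c) =
      (c - g) * involutionDet b h c g d f := by
  unfold involutionDet
  ring

/-- For six pairwise distinct points, one of the three Desargues involution
identities implies the other two. -/
theorem involution_one_implies_all {K : Type*} [Field K] (b h c g d f : K)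
    (hdist : List.Pairwise (· ≠ ·) [b, h, c, g, d, f])
    (h1 : (d - g) * (f - g) * (b - c) * (h - c) = (b - g) * (h - g) * (d - c) * (f - c)) :
    (c - f) * (g - f) * (b - d) * (h - d) = (b - f) * (h - f) * (c - d) * (g - d) ∧
    (c - h) * (g - h) * (d - b) * (f - b) = (d - h) * (f - h) * (c - b) * (g - b) := by
  have hcg : c - g ≠ 0 := by
    simp only [List.pairwise_cons, List.mem_cons] at hdist
    exact sub_ne_zero.mpr (hdist.2.2.1 g (Or.inl rfl))
  have hdet : involutionDet b h c g d f = 0 := by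
    have key := involution_identity b h c g d f
    rw [h1, sub_self] at key
    exact (mul_eq_zero.mp key.symm).resolve_left hcg
  unfold involutionDet at hdet
  constructor
  · linear_combination (f - d) * hdet
  · linear_combination (b - h) * hdet
end

section
/- Desargues' synthesis of page 10 of the Brouillon Project (four-point involutions with mean nodes): let K be a field of characteristic different from 2 and let b, h, c, g, d, f, p, q be pairwise distinct elements of K. Suppose that the three couples (b,h), (c,g), (d,f) form an algebraic involution, and that the couple (p,q) is in harmonic division with the couple (c,g) (i.e. (p-c)(q-g) + (p-g)(q-c) = 0) and also in harmonic division with the couple (b,h) (i.e. (p-b)(q-h) + (p-h)(q-b) = 0). Then (p,q) is in harmonic division with the third couple (d,f): (p-d)(q-f) + (p-f)(q-d) = 0. -/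
/-! Identify a couple `(x, y)` with the vector `(1, x + y, x * y)`. The involution condition says
that the vectors of the three couples are linearly dependent: since `c ≠ g`, the first product
identity already gives that their determinant vanishes. Harmonic division with the fixed couple
`(p, q)` is the vanishing of the linear form `L = 2pq - (p + q)(x + y) + 2xy` on that vector. The
vectors of `(b, h)` and `(c, g)` are independent because `b ∉ {c, g}`, so `L` vanishes on the third
vector as soon as it vanishes on these two. -/

/-- Desargues' synthesis of page 10 of the Brouillon Project: a couple (p,q) in
harmonic division with two of the three couples of an involution is in harmonic
division with the third. -/
theorem harmonic_agregative {K : Type*} [Field K] (hchar : ringChar K ≠ 2)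
    (b h c g d f p q : K)
    (hdist : List.Pairwise (· ≠ ·) [b, h, c, g, d, f, p, q])
    (h1 : (d - g) * (f - g) * (b - c) * (h - c) = (b - g) * (h - g) * (d - c) * (f - c))
    (h2 : (c - f) * (g - f) * (b - d) * (h - d) = (b - f) * (h - f) * (c - d) * (g - d))
    (h3 : (c - h) * (g - h) * (d - b) * (f - b) = (d - h) * (f - h) * (c - b) * (g - b))
    (hcg : (p - c) * (q - g) + (p - g) * (q - c) = 0)
    (hbh : (p - b) * (q - h) + (p - h) * (q - b) = 0) :
    (p - d) * (q - f) + (p - f) * (q - d) = 0 := by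
  have h2ne : (2 : K) ≠ 0 := Ring.two_ne_zero hchar
  simp only [List.pairwise_cons, List.mem_cons] at hdist
  have hbc : b - c ≠ 0 := sub_ne_zero.mpr (hdist.1 c (by simp))
  have hbg : b - g ≠ 0 := sub_ne_zero.mpr (hdist.1 g (by simp))
  have hcg' : c - g ≠ 0 := sub_ne_zero.mpr (hdist.2.2.1 g (by simp))
  -- the determinant of the three vectors `(1, x + y, x * y)`
  have hdet : (c + g - (b + h)) * (d * f - b * h) - (d + f - (b + h)) * (c * g - b * h) = 0 := by
    refine mul_left_cancel₀ hcg' ?_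
    linear_combination h1
  -- equal sums would force equal products by harmonicity, making `b` a root of `(X - c) * (X - g)`
  have hs : c + g - (b + h) ≠ 0 := by
    intro hs
    have ht : c * g - b * h = 0 := by
      refine mul_left_cancel₀ h2ne ?_
      linear_combination hcg - hbh + (p + q) * hs
    have hroot : (b - c) * (b - g) = 0 := by
      linear_combination ht - b * hs
    exact mul_ne_zero hbc hbg hroot
  -- replacing the column of products by `L` multiplies the determinant by `2`
  refine mul_left_cancel₀ hs ?_
  linear_combination 2 * hdet + (d + f - (b + h)) * (hcg - hbh) + (c + g - (b + h)) * hbh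
end

section
/- Engagement of the souche versus mixing of the couples (the claim of page 4, lines 3–5 of the Brouillon Project): let a, c, g, d, f be pairwise distinct real numbers with (c-a)(g-a) = (d-a)(f-a). Then (c-a)(g-a) < 0 if and only if (d-c)(d-g)(f-c)(f-g) < 0. (The condition (c-a)(g-a) < 0 says the souche a is engaged between each couple of branches; the condition (d-c)(d-g)(f-c)(f-g) < 0 says the two couples {c,g} and {d,f} are 'mêlés', i.e. exactly one of d, f lies strictly between c and g.) -/
/-! With `s = c + g - d - f`, the souche relation gives `(d - c)(f - c) = (c - a) s` and
`(d - g)(f - g) = (g - a) s`. Multiplying these, the mixing product equals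
`(c - a)(g - a) s ^ 2`, and `s ≠ 0` because the branches are distinct; so the two
products have the same sign. -/

/-- Engagement of the souche versus mixing of the couples (page 4, lines 3–5 of
the Brouillon Project). -/
theorem engaged_iff_mesles (a c g d f : ℝ)
    (hdist : List.Pairwise (· ≠ ·) [a, c, g, d, f])
    (h : (c - a) * (g - a) = (d - a) * (f - a)) :
    (c - a) * (g - a) < 0 ↔ (d - c) * (d - g) * (f - c) * (f - g) < 0 := by
  have hc : (d - c) * (f - c) = (c - a) * (c + g - d - f) := by linear_combination -h
  have hg : (d - g) * (f - g) = (g - a) * (c + g - d - f) := by linear_combination -h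
  have key : (d - c) * (d - g) * (f - c) * (f - g) =
      (c - a) * (g - a) * (c + g - d - f) ^ 2 := by
    calc _ = ((d - c) * (f - c)) * ((d - g) * (f - g)) := by ring
      _ = _ := by rw [hc, hg]; ring
  simp only [List.pairwise_cons, List.mem_cons] at hdist
  have hcd : d - c ≠ 0 := sub_ne_zero.mpr (hdist.2.1 d (by simp)).symm
  have hcf : f - c ≠ 0 := sub_ne_zero.mpr (hdist.2.1 f (by simp)).symm
  -- If the two sums of branches agreed, `c` would coincide with `d` or `f`.
  have hs : c + g - d - f ≠ 0 := by
    intro h0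
    rw [h0, mul_zero] at hc
    exact mul_ne_zero hcd hcf hc
  have hpos : 0 < (c + g - d - f) ^ 2 := by positivity
  rw [key]
  exact ⟨fun hn => mul_neg_of_neg_of_pos hn hpos, fun hn => neg_of_mul_neg_left hn hpos.le⟩
end

section
/- Simple mean nodes (pages 6–7 of the Brouillon Project): let K be a field and a, b, h, c, g ∈ K with g = 2a - c (so that a is the midpoint of c and g: the couple (c,g) is a couple of simple mean nodes of a tree with engaged souche a) and (b-a)(h-a) = (c-a)(g-a). Then (b-g)(h-g) = -((b-c)(h-c)); in Desargues' unsigned terms, the rectangle GB·GH equals the rectangle CB·CH. -/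
/-- Simple mean nodes (pages 6–7 of the Brouillon Project): the rectangle GB·GH
equals the rectangle CB·CH (up to sign, in signed segments). -/
theorem simple_mean_nodes {K : Type*} [Field K] (a b h c g : K)
    (hg : g = 2 * a - c)
    (htree : (b - a) * (h - a) = (c - a) * (g - a)) :
    (b - g) * (h - g) = -((b - c) * (h - c)) := by
  subst hg
  -- With the origin at `a` we have `g = -c`, so the cross terms of
  -- `(b + c) * (h + c) + (b - c) * (h - c)` cancel, leaving `2 * (b * h + c ^ 2)`,
  -- which is twice the tree relation.
  linear_combination 2 * htree
end

section
/- Reciprocal souches (page 8 of the Brouillon Project): let K be a field of characteristic ≠ 2 and a, b, h, c ∈ K with c ≠ a and (b-a)(h-a) = (c-a)^2, and set d = 2a - c. Let l = (b+h)/2 be the midpoint of b and h. Then (c-l)(d-l) = (b-l)^2 and (h-l)^2 = (b-l)^2; that is, l is the souche of a tree in which (c,d) is the couple of extreme nodes and (b,b), (h,h) are two couples of double mean nodes. The two points a and l are thus 'souches réciproques entre elles' of the harmonic division {b,h}, {c,d}. -/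
/-- Reciprocal souches (page 8 of the Brouillon Project): the midpoint l of b and
h is souche of the tree with extreme nodes (c,d) and double mean nodes (b,b),
(h,h). -/
theorem reciprocal_souches {K : Type*} [Field K] (hchar : ringChar K ≠ 2)
    (a b h c : K) (hc : c ≠ a)
    (htree : (b - a) * (h - a) = (c - a) ^ 2) :
    (c - (b + h) / 2) * ((2 * a - c) - (b + h) / 2) = (b - (b + h) / 2) ^ 2 ∧
    (h - (b + h) / 2) ^ 2 = (b - (b + h) / 2) ^ 2 := by
  have h2 : (2 : K) ≠ 0 := Ring.two_ne_zero hchar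
  obtain ⟨l, hl⟩ : ∃ l, l = (b + h) / 2 := ⟨_, rfl⟩
  have hh : h = 2 * l - b := by rw [hl]; field_simp; ring
  rw [← hl]
  subst hh
  -- Since a is the midpoint of c and d, and l that of b and h, the two products are
  -- (l - a)² - (c - a)² and (l - a)² - (b - a)(h - a), which `htree` identifies.
  exact ⟨by linear_combination htree, by ring⟩
end

section
/- Criterion for a four-point involution (page 10, lines 19 and following, of the Brouillon Project): let K be a field and a, b, h, f, g ∈ K with f + g = 2a (a is the midpoint of f and g) and (h-b)(a-b) = (f-b)(g-b) (i.e. BH is to BG as BF is to BA). Then the couple (b,h) is in harmonic division with the couple (f,g): (b-f)(h-g) + (b-g)(h-f) = 0. -/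
/-- Criterion for a four-point involution (page 10, lines 19 and following, of
the Brouillon Project). -/
theorem four_point_involution_criterion {K : Type*} [Field K] (a b h f g : K)
    (hmid : f + g = 2 * a)
    (hprop : (h - b) * (a - b) = (f - b) * (g - b)) :
    (b - f) * (h - g) + (b - g) * (h - f) = 0 := by
  -- With `f + g = 2 * a`, both the harmonic relation and twice the proportion say
  -- `b * h + f * g = a * (b + h)` up to the factor `2`; no division by `2` is needed.
  linear_combination (b - h) * hmid - 2 * hprop
end

section
/- Pappus' lemma (Collection, Book VII, Proposition 22), as paraphrased by Beaugrand: let K be a field and a, b, c, d, e ∈ K with (a-d)(c-d) = (b-d)(e-d) (the rectangles AD·DC and BD·DE are equal). Then (b-d)(e-c)(a-e) = (e-d)(a-b)(b-c) (i.e. BD is to DE as the rectangle AB·BC is to the rectangle AE·EC) and (a-d)(b-c)(e-c) = (c-d)(a-b)(a-e) (i.e. AD is to DC as the rectangle BA·AE is to the rectangle BC·CE). -/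
/-- Pappus' lemma (Collection, Book VII, Proposition 22), as paraphrased by
Beaugrand: BD : DE = AB·BC : AE·EC and AD : DC = BA·AE : BC·CE, in
cross-multiplied form with signed segments. -/
theorem pappus_lemma {K : Type*} [Field K] (a b c d e : K)
    (h : (a - d) * (c - d) = (b - d) * (e - d)) :
    (b - d) * ((e - c) * (a - e)) = (e - d) * ((a - b) * (b - c)) ∧
    (a - d) * ((b - c) * (e - c)) = (c - d) * ((a - b) * (a - e)) := by
  -- With `d` as origin, the two differences of sides factor as
  -- `(e - b) * (a * c - b * e)` and `(c - a) * (a * c - b * e)`.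
  exact ⟨by linear_combination (e - b) * h, by linear_combination (c - a) * h⟩
end
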